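/- Let H ⊴ G be a normal embedding of linearly reductive quantum groups (a normal Hopf algebra surjection O(G) → O(H) with both Hopf algebras cosemisimple), and define the relation ∼ between Ĝ and Ĥ by: V ∼ W iff hom_H(Res^G_H V, W) ≠ 0, equivalently hom_G(V, Ind^G_H W) ≠ 0. Then: (a) the left-hand slices slice_W = {V ∈ Ĝ : V ∼ W}, W ∈ Ĥ, are precisely the classes of the equivalence relation ∼_G on Ĝ given by V ∼_G V′ iff Res^G_H V and Res^G_H V′ have the same simple constituents; and (b) the right-hand slices _V slice = {W ∈ Ĥ : V ∼ W}, V ∈ Ĝ, are precisely the (finite) classes of an equivalence relation on Ĥ. -/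

import Mathlib

/- Common infrastructure: right comodules over coalgebras, simplicity,
cosemisimplicity, subcoalgebras, adjoint coactions, normality, etc. -/

open TensorProduct

universe u

namespace QG

variable (k : Type u) [Field k]

section Coalg

variable (C : Type u) [AddCommGroup C] [Module k C] [Coalgebra k C]

/-- `ρ : V →ₗ[k] V ⊗[k] C` is a (coassociative, counital) right coaction. -/
structure IsComod {V : Type u} [AddCommGroup V] [Module k V]
    (ρ : V →ₗ[k] V ⊗[k] C) : Prop where
  coassoc : ∀ v : V, ρ.rTensor C (ρ v) =
    (TensorProduct.assoc k V C C).symm.toLinearMap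
      ((Coalgebra.comul (R := k) (A := C)).lTensor V (ρ v))
  counit : ∀ v : V, (TensorProduct.rid k V)
      ((Coalgebra.counit (R := k) (A := C)).lTensor V (ρ v)) = v

/-- A submodule `U ≤ V` is a subcomodule if the coaction restricts to it,
i.e. maps `U` into the image of `U ⊗ C` in `V ⊗ C`. -/
def IsSubcomod {V : Type u} [AddCommGroup V] [Module k V]
    (ρ : V →ₗ[k] V ⊗[k] C) (U : Submodule k V) : Prop :=
  ∀ u ∈ U, ρ u ∈ LinearMap.range ((U.subtype).rTensor C)

/-- A simple subcomodule: a nonzero subcomodule with no nonzero proper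
subcomodules below it. -/
def IsSimpleSubcomod {V : Type u} [AddCommGroup V] [Module k V]
    (ρ : V →ₗ[k] V ⊗[k] C) (U : Submodule k V) : Prop :=
  IsSubcomod k C ρ U ∧ U ≠ ⊥ ∧
    ∀ U' : Submodule k V, U' ≤ U → IsSubcomod k C ρ U' → U' = ⊥ ∨ U' = U

/-- A comodule is simple if it is simple as a subcomodule of itself. -/
def IsSimpleComod {V : Type u} [AddCommGroup V] [Module k V]
    (ρ : V →ₗ[k] V ⊗[k] C) : Prop :=
  IsSimpleSubcomod k C ρ ⊤

/-- Morphisms of right `C`-comodules. -/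
def IsComodHom {V W : Type u} [AddCommGroup V] [Module k V]
    [AddCommGroup W] [Module k W]
    (ρV : V →ₗ[k] V ⊗[k] C) (ρW : W →ₗ[k] W ⊗[k] C) (f : V →ₗ[k] W) : Prop :=
  ρW ∘ₗ f = (f.rTensor C) ∘ₗ ρV

/-- `C` is cosemisimple: every right `C`-comodule is an (internal) direct sum
of simple subcomodules. -/
def IsCosemisimple : Prop :=
  ∀ (V : Type u) [AddCommGroup V] [Module k V]
    (ρ : V →ₗ[k] V ⊗[k] C), IsComod k C ρ →
    ∃ (ι : Type u) (U : ι → Submodule k V),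
      (∀ i, IsSimpleSubcomod k C ρ (U i)) ∧
      iSupIndep U ∧ (⨆ i, U i) = ⊤

/-- Subcoalgebras of `C`, as submodules. -/
def IsSubcoalgebra (D : Submodule k C) : Prop :=
  ∀ x ∈ D, Coalgebra.comul (R := k) x ∈
    LinearMap.range (TensorProduct.map D.subtype D.subtype)

/-- Simple subcoalgebras: nonzero ones with no nonzero proper subcoalgebras. -/
def IsSimpleSubcoalgebra (D : Submodule k C) : Prop :=
  IsSubcoalgebra k C D ∧ D ≠ ⊥ ∧
    ∀ D' : Submodule k C, D' ≤ D → IsSubcoalgebra k C D' → D' = ⊥ ∨ D' = D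

/-- The coefficient space of a comodule: the smallest submodule `D ≤ C` such
that the coaction factors through `V ⊗ D`.  For a simple comodule this is its
coefficient coalgebra. -/
def coeffSpace {V : Type u} [AddCommGroup V] [Module k V]
    (ρ : V →ₗ[k] V ⊗[k] C) : Submodule k C :=
  sInf {D : Submodule k C | ∀ v : V, ρ v ∈ LinearMap.range ((D.subtype).lTensor V)}

/-- Corestriction of a coaction along a linear map of coalgebras `π : C → D`. -/
noncomputable def cores {D : Type u} [AddCommGroup D] [Module k D]
    {V : Type u} [AddCommGroup V] [Module k V]
    (π : C →ₗ[k] D) (ρ : V →ₗ[k] V ⊗[k] C) : V →ₗ[k] V ⊗[k] D :=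
  (π.lTensor V) ∘ₗ ρ

end Coalg

section Bialg

variable (H : Type u) [Ring H] [Bialgebra k H]

/-- An invariant vector for a coaction of a bialgebra. -/
def IsInvariant {V : Type u} [AddCommGroup V] [Module k V]
    (ρ : V →ₗ[k] V ⊗[k] H) (v : V) : Prop :=
  ρ v = v ⊗ₜ[k] (1 : H)

/-- The tensor product coaction on `V ⊗ W` for a bialgebra `H`:
`v ⊗ w ↦ (v₀ ⊗ w₀) ⊗ v₁w₁`. -/
noncomputable def tensorCoact {V W : Type u}
    [AddCommGroup V] [Module k V] [AddCommGroup W] [Module k W]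
    (ρV : V →ₗ[k] V ⊗[k] H) (ρW : W →ₗ[k] W ⊗[k] H) :
    (V ⊗[k] W) →ₗ[k] (V ⊗[k] W) ⊗[k] H :=
  ((LinearMap.mul' k H).lTensor (V ⊗[k] W)) ∘ₗ
    (TensorProduct.tensorTensorTensorComm k V H W H).toLinearMap ∘ₗ
    (TensorProduct.map ρV ρW)

/-- `O(G/H)`: the right coinvariants `{x | (id ⊗ π)Δ(x) = x ⊗ 1}` of a
quotient map `π`. -/
noncomputable def quotientSpaceLeft {B : Type u} [AddCommGroup B] [Module k B] [One B]
    (π : H →ₗ[k] B) : Submodule k H :=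
  LinearMap.ker ((π.lTensor H) ∘ₗ (Coalgebra.comul (R := k) (A := H)) -
    (TensorProduct.mk k H B).flip 1)

/-- `O(H\G)`: the left coinvariants `{x | (π ⊗ id)Δ(x) = 1 ⊗ x}`. -/
noncomputable def quotientSpaceRight {B : Type u} [AddCommGroup B] [Module k B] [One B]
    (π : H →ₗ[k] B) : Submodule k H :=
  LinearMap.ker ((π.rTensor H) ∘ₗ (Coalgebra.comul (R := k) (A := H)) -
    (TensorProduct.mk k B H) 1)

end Bialg

section Hopf

variable (H : Type u) [Ring H] [HopfAlgebra k H]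

/-- Iterated comultiplication `x ↦ x₁ ⊗ (x₂ ⊗ x₃)`. -/
noncomputable def comul2 : H →ₗ[k] H ⊗[k] (H ⊗[k] H) :=
  ((Coalgebra.comul (R := k) (A := H)).lTensor H) ∘ₗ (Coalgebra.comul (R := k) (A := H))

/-- The right adjoint coaction `x ↦ x₂ ⊗ S(x₁)x₃`. -/
noncomputable def adR : H →ₗ[k] H ⊗[k] H :=
  ((LinearMap.mul' k H).lTensor H) ∘ₗ
    (TensorProduct.assoc k H H H).toLinearMap ∘ₗ
    (((TensorProduct.comm k H H).toLinearMap).rTensor H) ∘ₗ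
    (TensorProduct.assoc k H H H).symm.toLinearMap ∘ₗ
    ((HopfAlgebra.antipode (R := k) (A := H)).rTensor (H ⊗[k] H)) ∘ₗ
    comul2 k H

/-- The left adjoint coaction `x ↦ x₁S(x₃) ⊗ x₂` (a left coaction, with the
coacting tensorand on the left). -/
noncomputable def adL : H →ₗ[k] H ⊗[k] H :=
  ((LinearMap.mul' k H).rTensor H) ∘ₗ
    (TensorProduct.assoc k H H H).symm.toLinearMap ∘ₗ
    (((TensorProduct.comm k H H).toLinearMap).lTensor H) ∘ₗ
    (((HopfAlgebra.antipode (R := k) (A := H)).lTensor H).lTensor H) ∘ₗ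
    comul2 k H

variable {B : Type u} [AddCommGroup B] [Module k B]

/-- `π : O(G) → O(H)` is right-normal: it is a morphism of right
`O(G)`-comodules for the right adjoint coaction, i.e. the right adjoint
coaction descends along `π`. -/
def IsRightNormal (π : H →ₗ[k] B) : Prop :=
  ∃ ρ : B →ₗ[k] B ⊗[k] H, ρ ∘ₗ π = (π.rTensor H) ∘ₗ adR k H

/-- `π : O(G) → O(H)` is left-normal: the left adjoint coaction descends
along `π`. -/
def IsLeftNormal (π : H →ₗ[k] B) : Prop :=
  ∃ lam : B →ₗ[k] H ⊗[k] B, lam ∘ₗ π = (π.lTensor H) ∘ₗ adL k H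

end Hopf

end QG

namespace QG

variable (k : Type u) [Field k]

section Coalg2

variable (C : Type u) [AddCommGroup C] [Module k C] [Coalgebra k C]

/-- A bundled simple right `C`-comodule. -/
structure SimpleComodule where
  V : Type u
  [addCommGroup : AddCommGroup V]
  [module : Module k V]
  ρ : V →ₗ[k] V ⊗[k] C
  isComod : IsComod k C ρ
  isSimple : IsSimpleComod k C ρ

attribute [instance] SimpleComodule.addCommGroup SimpleComodule.module

/-- A simple comodule `(T, ρT)` is a constituent of a comodule `(V, ρV)`
(over a cosemisimple coalgebra) iff there is a nonzero comodule map `T → V`. -/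
def IsConstituent {T V : Type u} [AddCommGroup T] [Module k T]
    [AddCommGroup V] [Module k V]
    (ρT : T →ₗ[k] T ⊗[k] C) (ρV : V →ₗ[k] V ⊗[k] C) : Prop :=
  ∃ f : T →ₗ[k] V, f ≠ 0 ∧ IsComodHom k C ρT ρV f

/-- Isomorphism of (simple) comodules. -/
def comodIsoRel (X Y : SimpleComodule k C) : Prop :=
  ∃ e : X.V ≃ₗ[k] Y.V, IsComodHom k C X.ρ Y.ρ e.toLinearMap

/-- The set `Ĉ` of isomorphism classes of simple right `C`-comodules. -/
def SimpleComodQuot := Quot (comodIsoRel k C)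

/-- The isomorphism class of a simple comodule. -/
def SimpleComodule.cls (X : SimpleComodule k C) : SimpleComodQuot k C :=
  Quot.mk _ X

/-- Group-like elements of a coalgebra; these correspond to the
one-dimensional comodules, i.e. to characters. -/
def IsGroupLike (a : C) : Prop :=
  Coalgebra.counit (R := k) (A := C) a = (1 : k) ∧
    Coalgebra.comul (R := k) (A := C) a = a ⊗ₜ[k] a

/-- A linear map `φ : C → Z` out of a coalgebra is central if
`φ(x₁) ⊗ x₂ = φ(x₂) ⊗ x₁`. -/
def IsCentralMap {Z : Type u} [AddCommGroup Z] [Module k Z] (φ : C →ₗ[k] Z) : Prop :=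
  (φ.rTensor C) ∘ₗ (Coalgebra.comul (R := k) (A := C)) =
    (φ.rTensor C) ∘ₗ (TensorProduct.comm k C C).toLinearMap ∘ₗ
      (Coalgebra.comul (R := k) (A := C))

/-- The simple comodule `X` has "central character" `g` with respect to the
quotient map `γ : C → Z`: corestricted along `γ`, the coaction on `X` is a sum
of copies of the character `g`. -/
def HasCentralChar {Z : Type u} [AddCommGroup Z] [Module k Z]
    (γ : C →ₗ[k] Z) (X : SimpleComodule k C) (g : Z) : Prop :=
  ∀ v : X.V, cores k C γ X.ρ v = v ⊗ₜ[k] g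

end Coalg2

/-- The k-span of the set of products `g * a`, `a ∈ Am`; for `Am` a submodule
this is the left ideal generated by `Am`. -/
def leftIdealGen {G : Type u} [Ring G] [Module k G] (Am : Submodule k G) :
    Submodule k G :=
  Submodule.span k {x : G | ∃ g : G, ∃ a ∈ Am, x = g * a}

end QG

namespace QG

variable (k : Type u) [Field k]
variable {G Hh : Type u} [Ring G] [HopfAlgebra k G] [Ring Hh] [HopfAlgebra k Hh]

/-- The relation `∼` between `Ĝ` and `Ĥ` for an embedding `H ≤ G`:
`V ∼ W` iff `hom_H(Res^G_H V, W) ≠ 0` (equivalently, by the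
induction–restriction adjunction, `hom_G(V, Ind^G_H W) ≠ 0`). -/
noncomputable def relRes (π : G →ₐc[k] Hh) :
    SimpleComodQuot k G → SimpleComodQuot k Hh → Prop :=
  fun x w => ∃ (X : SimpleComodule k G) (W : SimpleComodule k Hh),
    X.cls = x ∧ W.cls = w ∧
    ∃ f : X.V →ₗ[k] W.V, f ≠ 0 ∧
      IsComodHom k Hh (cores k G (π : G →ₗ[k] Hh) X.ρ) W.ρ f

/-- The relation `∼_G` on `Ĝ`: `V ∼_G V'` iff `Res^G_H V` and `Res^G_H V'`
have the same simple constituents. -/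
noncomputable def relResG (π : G →ₐc[k] Hh) :
    SimpleComodQuot k G → SimpleComodQuot k G → Prop :=
  fun x x' => ∀ w : SimpleComodQuot k Hh, relRes k π x w ↔ relRes k π x' w

end QG


namespace QG
section Helpers
variable {k : Type u} [Field k]
variable {C : Type u} [AddCommGroup C] [Module k C] [Coalgebra k C]
variable {V W : Type u} [AddCommGroup V] [Module k V] [AddCommGroup W] [Module k W]

set_option linter.unusedSectionVars false

/-- slice of a tensor by a functional -/
noncomputable def sl (φ : C →ₗ[k] k) : V ⊗[k] C →ₗ[k] V :=
  (TensorProduct.rid k V).toLinearMap ∘ₗ φ.lTensor V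

@[simp] lemma sl_tmul (φ : C →ₗ[k] k) (v : V) (c : C) : sl φ (v ⊗ₜ[k] c) = φ c • v := by
  simp [sl]

lemma sl_rTensor (φ : C →ₗ[k] k) (f : V →ₗ[k] W) (t : V ⊗[k] C) :
    sl φ (f.rTensor C t) = f (sl φ t) := by
  induction t with
  | zero => simp
  | tmul v c => simp
  | add x y hx hy => simp [hx, hy]

lemma eq_zero_of_sl (t : V ⊗[k] C) (h : ∀ φ : C →ₗ[k] k, sl φ t = 0) : t = 0 := by
  let b := Module.Free.chooseBasis k C
  apply (TensorProduct.equivFinsuppOfBasisRight (M := V) b).injective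
  rw [map_zero]
  ext i
  have key : ∀ t : V ⊗[k] C, TensorProduct.equivFinsuppOfBasisRight (M := V) b t i
      = sl (b.coord i) t := by
    intro t
    induction t with
    | zero => simp
    | tmul v c => simp
    | add x y hx hy => simp [hx, hy]
  rw [key, h]; simp

lemma eq_of_sl {t s : V ⊗[k] C} (h : ∀ φ : C →ₗ[k] k, sl φ t = sl φ s) : t = s := by
  rw [← sub_eq_zero]
  apply eq_zero_of_sl
  intro φ; rw [map_sub, h, sub_self]

lemma mem_range_iff (U : Submodule k V) (t : V ⊗[k] C) :
    t ∈ LinearMap.range (U.subtype.rTensor C) ↔ ∀ φ : C →ₗ[k] k, sl φ t ∈ U := by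
  constructor
  · rintro ⟨s, rfl⟩ φ
    rw [sl_rTensor]
    exact (sl φ s).2
  · intro h
    have ex : Function.Exact (U.subtype.rTensor C) (U.mkQ.rTensor C) :=
      rTensor_exact C (LinearMap.exact_subtype_mkQ U) U.mkQ_surjective
    apply (ex t).1
    apply eq_zero_of_sl
    intro φ
    rw [sl_rTensor]
    simpa using h φ

/-- action of functionals -/
noncomputable def act (ρ : V →ₗ[k] V ⊗[k] C) (φ : C →ₗ[k] k) : V →ₗ[k] V := sl φ ∘ₗ ρ

lemma isSubcomod_iff (ρ : V →ₗ[k] V ⊗[k] C) (U : Submodule k V) :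
    IsSubcomod k C ρ U ↔ ∀ u ∈ U, ∀ φ, act ρ φ u ∈ U := by
  simp only [IsSubcomod, mem_range_iff]; rfl

lemma isComodHom_iff (ρV : V →ₗ[k] V ⊗[k] C) (ρW : W →ₗ[k] W ⊗[k] C) (f : V →ₗ[k] W) :
    IsComodHom k C ρV ρW f ↔ ∀ φ v, f (act ρV φ v) = act ρW φ (f v) := by
  constructor
  · intro h φ v
    have := LinearMap.congr_fun h v
    simp only [LinearMap.comp_apply] at this
    simp only [act, LinearMap.comp_apply, this, sl_rTensor]
  · intro h
    ext v
    apply eq_of_sl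
    intro φ
    have := h φ v
    simp only [act, LinearMap.comp_apply] at this
    simp only [LinearMap.comp_apply, sl_rTensor, this]

lemma act_counit {ρ : V →ₗ[k] V ⊗[k] C} (h : IsComod k C ρ) (v : V) :
    act ρ (Coalgebra.counit (R := k) (A := C)) v = v := h.counit v

lemma act_act {ρ : V →ₗ[k] V ⊗[k] C} (h : IsComod k C ρ) (φ ψ : C →ₗ[k] k) :
    ∃ χ, ∀ v, act ρ ψ (act ρ φ v) = act ρ χ v := by
  refine ⟨(TensorProduct.rid k k).toLinearMap ∘ₗ TensorProduct.map ψ φ ∘ₗ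
    Coalgebra.comul (R := k) (A := C), fun v => ?_⟩
  have := congrArg (fun t => sl ψ (sl φ t)) (h.coassoc v)
  simp only [sl_rTensor] at this
  simp only [act, LinearMap.comp_apply, this]
  generalize ρ v = t
  induction t with
  | zero => simp
  | add x y hx hy => simp only [map_add, hx, hy]
  | tmul v c =>
    simp only [LinearMap.lTensor_tmul, LinearEquiv.coe_coe, sl_tmul, LinearMap.comp_apply]
    generalize (Coalgebra.comul (R := k) c) = d
    induction d with
    | zero => simp
    | add x y hx hy => simp only [map_add, hx, hy, TensorProduct.tmul_add, add_smul]
    | tmul a b => simp [smul_smul]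

/-- cyclic subcomodule -/
noncomputable def cyc (ρ : V →ₗ[k] V ⊗[k] C) (v : V) : Submodule k V :=
  Submodule.span k (Set.range fun φ => act ρ φ v)

lemma cyc_sub {ρ : V →ₗ[k] V ⊗[k] C} (h : IsComod k C ρ) (v : V) :
    IsSubcomod k C ρ (cyc ρ v) := by
  rw [isSubcomod_iff]
  intro u hu ψ
  induction hu using Submodule.span_induction with
  | mem x hx =>
    obtain ⟨φ, rfl⟩ := hx
    obtain ⟨χ, hχ⟩ := act_act h φ ψ
    simp only [hχ]
    exact Submodule.subset_span ⟨χ, rfl⟩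
  | zero => simp
  | add x y _ _ hx hy => rw [map_add]; exact add_mem hx hy
  | smul a x _ hx => rw [map_smul]; exact Submodule.smul_mem _ _ hx

lemma mem_cyc {ρ : V →ₗ[k] V ⊗[k] C} (h : IsComod k C ρ) (v : V) : v ∈ cyc ρ v :=
  Submodule.subset_span ⟨_, act_counit h v⟩

lemma cyc_fin (ρ : V →ₗ[k] V ⊗[k] C) (v : V) : Module.Finite k (cyc ρ v) := by
  have key : ∀ t : V ⊗[k] C, ∃ U : Submodule k V, Module.Finite k U ∧
      ∀ φ : C →ₗ[k] k, sl φ t ∈ U := by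
    intro t
    induction t with
    | zero => exact ⟨⊥, inferInstance, by simp⟩
    | tmul v c =>
      refine ⟨Submodule.span k {v}, inferInstance, fun φ => ?_⟩
      rw [sl_tmul]
      exact Submodule.smul_mem _ _ (Submodule.mem_span_singleton_self v)
    | add x y hx hy =>
      obtain ⟨U, _, hU⟩ := hx
      obtain ⟨U', _, hU'⟩ := hy
      refine ⟨U ⊔ U', inferInstance, fun φ => ?_⟩
      rw [map_add]
      exact Submodule.add_mem_sup (hU φ) (hU' φ)
  obtain ⟨U, hf, hU⟩ := key (ρ v)
  refine Submodule.finiteDimensional_of_le (S₂ := U) (Submodule.span_le.2 ?_)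
  rintro _ ⟨φ, rfl⟩
  exact hU φ

lemma simple_fin {ρ : V →ₗ[k] V ⊗[k] C} (h : IsComod k C ρ) (hs : IsSimpleComod k C ρ) :
    Module.Finite k V := by
  obtain ⟨v, -, hv⟩ := (Submodule.ne_bot_iff _).1 hs.2.1
  rcases hs.2.2 (cyc ρ v) le_top (cyc_sub h v) with h0 | h1
  · have := mem_cyc h v
    rw [h0] at this
    exact absurd this (by simpa using hv)
  · have := cyc_fin ρ v
    rw [h1] at this
    exact Module.Finite.equiv (Submodule.topEquiv (R := k) (M := V))

/-- hom from simple: injective -/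
lemma simple_inj {ρV : V →ₗ[k] V ⊗[k] C} {ρW : W →ₗ[k] W ⊗[k] C}
    (hs : IsSimpleComod k C ρV) {f : V →ₗ[k] W} (hf : IsComodHom k C ρV ρW f) (h0 : f ≠ 0) :
    Function.Injective f := by
  rw [isComodHom_iff] at hf
  rw [← LinearMap.ker_eq_bot]
  have hsub : IsSubcomod k C ρV (LinearMap.ker f) := by
    rw [isSubcomod_iff]
    intro u hu φ
    rw [LinearMap.mem_ker] at hu ⊢
    rw [hf, hu, map_zero]
  rcases hs.2.2 (LinearMap.ker f) le_top hsub with h | h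
  · exact h
  · exact absurd (LinearMap.ker_eq_top.1 h) h0

lemma simple_surj {ρV : V →ₗ[k] V ⊗[k] C} {ρW : W →ₗ[k] W ⊗[k] C}
    (hs : IsSimpleComod k C ρW) {f : V →ₗ[k] W} (hf : IsComodHom k C ρV ρW f) (h0 : f ≠ 0) :
    Function.Surjective f := by
  rw [isComodHom_iff] at hf
  rw [← LinearMap.range_eq_top]
  have hsub : IsSubcomod k C ρW (LinearMap.range f) := by
    rw [isSubcomod_iff]
    rintro _ ⟨v, rfl⟩ φ
    exact ⟨_, hf φ v⟩
  rcases hs.2.2 (LinearMap.range f) le_top hsub with h | h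
  · exact absurd (LinearMap.range_eq_bot.1 h) h0
  · exact h

lemma hom_comp {X : Type u} [AddCommGroup X] [Module k X]
    {ρV : V →ₗ[k] V ⊗[k] C} {ρW : W →ₗ[k] W ⊗[k] C} {ρX : X →ₗ[k] X ⊗[k] C}
    {g : W →ₗ[k] X} {f : V →ₗ[k] W}
    (hg : IsComodHom k C ρW ρX g) (hf : IsComodHom k C ρV ρW f) :
    IsComodHom k C ρV ρX (g ∘ₗ f) := by
  rw [isComodHom_iff] at *
  intro φ v
  simp [hf, hg]

lemma hom_symm {ρV : V →ₗ[k] V ⊗[k] C} {ρW : W →ₗ[k] W ⊗[k] C}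
    (e : V ≃ₗ[k] W) (h : IsComodHom k C ρV ρW e.toLinearMap) :
    IsComodHom k C ρW ρV e.symm.toLinearMap := by
  rw [isComodHom_iff] at *
  intro φ v
  apply e.injective
  have := h φ (e.symm v)
  simp at this
  simp [this]

/-- Restricted coaction -/
lemma exists_restrict {ρ : V →ₗ[k] V ⊗[k] C} (h : IsComod k C ρ) {U : Submodule k V}
    (hU : IsSimpleSubcomod k C ρ U) :
    ∃ ρU : U →ₗ[k] U ⊗[k] C, IsComod k C ρU ∧ IsSimpleComod k C ρU ∧
      IsComodHom k C ρU ρ U.subtype := by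
  have inj : Function.Injective (U.subtype.rTensor C) :=
    Module.Flat.rTensor_preserves_injective_linearMap _ U.injective_subtype
  let e := LinearEquiv.ofInjective (U.subtype.rTensor C) inj
  let ρU : U →ₗ[k] U ⊗[k] C := e.symm.toLinearMap ∘ₗ
    LinearMap.codRestrict _ (ρ ∘ₗ U.subtype) (fun u => hU.1 u u.2)
  have hh : ∀ u : U, U.subtype.rTensor C (ρU u) = ρ u := by
    intro u
    have : e (ρU u) = LinearMap.codRestrict _ (ρ ∘ₗ U.subtype) (fun u => hU.1 u u.2) u := by
      simp [ρU]
    exact congrArg Subtype.val this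
  have hom : IsComodHom k C ρU ρ U.subtype := by
    ext u; simp [hh]
  have hact := (isComodHom_iff _ _ _).1 hom
  refine ⟨ρU, ⟨?_, ?_⟩, ⟨?_, ?_, ?_⟩, hom⟩
  · intro u
    have inj2 : Function.Injective ((U.subtype.rTensor C).rTensor C) :=
      Module.Flat.rTensor_preserves_injective_linearMap _ inj
    apply inj2
    have e1 : ((U.subtype.rTensor C).rTensor C) (ρU.rTensor C (ρU u)) =
        ρ.rTensor C (U.subtype.rTensor C (ρU u)) := by
      have := LinearMap.congr_fun (congrArg (LinearMap.rTensor C) hom) (ρU u)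
      rw [LinearMap.rTensor_comp, LinearMap.rTensor_comp] at this
      exact this.symm
    have e2 : ∀ t : U ⊗[k] C, ((U.subtype.rTensor C).rTensor C)
        ((TensorProduct.assoc k U C C).symm.toLinearMap
          ((Coalgebra.comul (R := k) (A := C)).lTensor U t)) =
        (TensorProduct.assoc k V C C).symm.toLinearMap
          ((Coalgebra.comul (R := k) (A := C)).lTensor V (U.subtype.rTensor C t)) := by
      intro t
      induction t with
      | zero => simp
      | add x y hx hy => simp only [map_add, hx, hy]
      | tmul v c =>
        simp only [LinearMap.lTensor_tmul, LinearMap.rTensor_tmul]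
        generalize (Coalgebra.comul (R := k) c) = d
        induction d with
        | zero => simp
        | add x y hx hy => simp only [map_add, hx, hy, TensorProduct.tmul_add]
        | tmul a b => simp
    rw [e1, e2, hh]
    exact h.coassoc u
  · intro u
    apply U.injective_subtype
    have := hact (Coalgebra.counit (R := k) (A := C)) u
    rw [act_counit h] at this
    exact this
  · rw [isSubcomod_iff]; intros; trivial
  · intro h0
    apply hU.2.1
    rw [eq_bot_iff]
    intro x hx
    have : (⟨x, hx⟩ : U) ∈ (⊤ : Submodule k U) := trivial
    rw [h0] at this
    simpa using this
  · intro U' _ hU'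
    rw [isSubcomod_iff] at hU'
    have hsub : IsSubcomod k C ρ (U'.map U.subtype) := by
      rw [isSubcomod_iff]
      rintro _ ⟨u, hu, rfl⟩ φ
      exact ⟨_, hU' u hu φ, hact φ u⟩
    rcases hU.2.2 (U'.map U.subtype) (Submodule.map_subtype_le U U') hsub with h1 | h1
    · left
      apply Submodule.map_injective_of_injective U.injective_subtype
      simpa using h1
    · right
      apply Submodule.map_injective_of_injective U.injective_subtype
      simpa using h1

lemma regular_comod : IsComod k C (Coalgebra.comul (R := k) (A := C)) := by
  constructor
  · intro v
    apply (TensorProduct.assoc k C C C).injective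
    simp
  · intro v; simp

variable {D : Type u} [AddCommGroup D] [Module k D] [Coalgebra k D]

lemma cores_comod {ρ : V →ₗ[k] V ⊗[k] C} (h : IsComod k C ρ) (p : C →ₗ[k] D)
    (hp : ∀ c, Coalgebra.comul (R := k) (p c) = TensorProduct.map p p (Coalgebra.comul (R := k) c))
    (hp' : ∀ c, Coalgebra.counit (R := k) (p c) = Coalgebra.counit (R := k) c) :
    IsComod k D (cores k C p ρ) := by
  constructor
  · intro v
    have e1 : ∀ t : V ⊗[k] C, (cores k C p ρ).rTensor D (p.lTensor V t) =
        TensorProduct.map (p.lTensor V) p (ρ.rTensor C t) := by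
      intro t
      induction t with
      | zero => simp
      | add x y hx hy => simp only [map_add, hx, hy]
      | tmul v c => simp [cores]
    have e2 : ∀ t : V ⊗[k] C, (TensorProduct.assoc k V D D).symm.toLinearMap
          ((Coalgebra.comul (R := k) (A := D)).lTensor V (p.lTensor V t)) =
        TensorProduct.map (p.lTensor V) p ((TensorProduct.assoc k V C C).symm.toLinearMap
          ((Coalgebra.comul (R := k) (A := C)).lTensor V t)) := by
      intro t
      induction t with
      | zero => simp
      | add x y hx hy => simp only [map_add, hx, hy]
      | tmul v c =>
        simp only [LinearMap.lTensor_tmul, hp]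
        generalize (Coalgebra.comul (R := k) c) = d
        induction d with
        | zero => simp
        | add x y hx hy => simp only [map_add, hx, hy, TensorProduct.tmul_add]
        | tmul a b => simp
    change (cores k C p ρ).rTensor D (p.lTensor V (ρ v)) = _
    rw [e1, h.coassoc, ← e2]
    rfl
  · intro v
    have : (Coalgebra.counit (R := k) (A := D)).lTensor V (p.lTensor V (ρ v)) =
        (Coalgebra.counit (R := k) (A := C)).lTensor V (ρ v) := by
      rw [← LinearMap.comp_apply, ← LinearMap.lTensor_comp]
      congr 2
      ext c; simp [hp']
    change (TensorProduct.rid k V) ((Coalgebra.counit (R := k) (A := D)).lTensor V (p.lTensor V (ρ v))) = v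
    rw [this]
    exact h.counit v

lemma exists_iso_of_map {ι : Type u} (U : ι → Submodule k V) (hU : (⨆ i, U i) = ⊤) {f : V →ₗ[k] W} (h0 : f ≠ 0) :
    ∃ i, f ∘ₗ (U i).subtype ≠ 0 := by
  by_contra! hc
  apply h0
  rw [← LinearMap.ker_eq_top, eq_top_iff, ← hU]
  refine iSup_le fun i x hx => ?_
  exact LinearMap.congr_fun (hc i) ⟨x, hx⟩

/-- Schur -/
lemma schur {ρV : V →ₗ[k] V ⊗[k] C} {ρW : W →ₗ[k] W ⊗[k] C}
    (hV : IsSimpleComod k C ρV) (hW : IsSimpleComod k C ρW)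
    {f : V →ₗ[k] W} (hf : IsComodHom k C ρV ρW f) (h0 : f ≠ 0) :
    ∃ e : V ≃ₗ[k] W, IsComodHom k C ρV ρW e.toLinearMap :=
  ⟨LinearEquiv.ofBijective f ⟨simple_inj hV hf h0, simple_surj hW hf h0⟩, hf⟩

lemma hom_rev1 (hC : IsCosemisimple k C) {ρV : V →ₗ[k] V ⊗[k] C} {ρW : W →ₗ[k] W ⊗[k] C}
    (hV : IsComod k C ρV) (hW : IsSimpleComod k C ρW)
    {f : V →ₗ[k] W} (hf : IsComodHom k C ρV ρW f) (h0 : f ≠ 0) :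
    ∃ g : W →ₗ[k] V, IsComodHom k C ρW ρV g ∧ Function.Injective g := by
  obtain ⟨ι, U, hs, -, ht⟩ := hC V ρV hV
  obtain ⟨i, hi⟩ := exists_iso_of_map U ht h0
  obtain ⟨ρU, -, hUs, hUh⟩ := exists_restrict hV (hs i)
  obtain ⟨e, he⟩ := schur hUs hW (hom_comp hf hUh) hi
  refine ⟨(U i).subtype ∘ₗ e.symm.toLinearMap, hom_comp hUh (hom_symm e he), ?_⟩
  exact (U i).injective_subtype.comp e.symm.injective

lemma hom_rev2 (hC : IsCosemisimple k C) {ρV : V →ₗ[k] V ⊗[k] C} {ρW : W →ₗ[k] W ⊗[k] C}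
    (hV : IsComod k C ρV) (hW : IsSimpleComod k C ρW)
    {f : W →ₗ[k] V} (hf : IsComodHom k C ρW ρV f) (h0 : f ≠ 0) :
    ∃ g : V →ₗ[k] W, IsComodHom k C ρV ρW g ∧ g ≠ 0 := by
  classical
  obtain ⟨ι, U, hs, hind, ht⟩ := hC V ρV hV
  obtain ⟨w, hw⟩ : ∃ w, f w ≠ 0 := by
    by_contra! hc
    exact h0 (LinearMap.ext hc)
  have hmem : f w ∈ ⨆ i, U i := by rw [ht]; trivial
  obtain ⟨x, hx, hsum⟩ := (Submodule.mem_iSup_iff_exists_finsupp _ _).1 hmem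
  obtain ⟨i, hi⟩ : ∃ i, x i ≠ 0 := by
    by_contra! hc
    apply hw
    rw [← hsum]
    have : x = 0 := by ext i; exact hc i
    simp [this]
  set N : Submodule k V := ⨆ j, ⨆ (_ : j ≠ i), U j with hN
  have hdis : Disjoint (U i) N := hind i
  have hcompl : IsCompl (U i) N := by
    refine ⟨hdis, ?_⟩
    rw [codisjoint_iff, eq_top_iff, ← ht]
    refine iSup_le fun j => ?_
    by_cases hj : j = i
    · subst hj; exact le_sup_left
    · exact le_trans (le_iSup₂_of_le j hj le_rfl) le_sup_right
  have hNst : ∀ φ, ∀ n ∈ N, act ρV φ n ∈ N := by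
    intro φ
    have : N ≤ N.comap (act ρV φ) := by
      refine iSup₂_le fun j hj y hy => ?_
      exact (le_iSup₂_of_le (f := fun j (_ : j ≠ i) => U j) j hj le_rfl)
        ((isSubcomod_iff _ _).1 (hs j).1 y hy φ)
    exact this
  obtain ⟨ρU, -, hUs, hUh⟩ := exists_restrict hV (hs i)
  have hUact := (isComodHom_iff _ _ _).1 hUh
  let P := (U i).projectionOnto N hcompl
  have hP : IsComodHom k C ρV ρU P := by
    rw [isComodHom_iff]
    intro φ v
    have hv : v = ((P v : U i) : V) + (v - P v) := by abel
    have hk : v - P v ∈ N := by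
      rw [← Submodule.projectionOnto_apply_eq_zero_iff hcompl, map_sub, sub_eq_zero]
      exact (Submodule.projectionOnto_apply_left hcompl (P v)).symm
    conv_lhs => rw [hv]
    rw [map_add, map_add]
    have h1 : P (act ρV φ (v - P v)) = 0 :=
      (Submodule.projectionOnto_apply_eq_zero_iff hcompl).2 (hNst φ _ hk)
    have h2 := hUact φ (P v)
    simp only [Submodule.subtype_apply] at h2
    rw [h1, ← h2, add_zero]
    simp [P]
  have hPf : P ∘ₗ f ≠ 0 := by
    intro h
    have h1 : P (f w) = 0 := LinearMap.congr_fun h w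
    have h2 : f w ∈ N := (Submodule.projectionOnto_apply_eq_zero_iff hcompl).1 h1
    have h3 : x i ∈ N := by
      have : f w - (f w - x i) ∈ N := by
        refine sub_mem h2 ?_
        rw [← hsum, Finsupp.sum, ← Finset.sum_erase_add (a := i) _ _ (by simpa using hi),
          add_sub_cancel_right]
        refine sum_mem fun j hj => ?_
        exact (le_iSup₂_of_le (f := fun j (_ : j ≠ i) => U j) j (Finset.ne_of_mem_erase hj) le_rfl)
          (hx j)
      simpa using this
    exact hi (Submodule.disjoint_def.1 hdis _ (hx i) h3)
  obtain ⟨e, he⟩ := schur hW hUs (hom_comp hP hf) hPf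
  refine ⟨e.symm.toLinearMap ∘ₗ P, hom_comp (hom_symm e he) hP, ?_⟩
  intro h
  apply hPf
  ext w
  have : e.symm (P (f w)) = 0 := LinearMap.congr_fun h (f w)
  simp at this
  simp [this]

end Helpers

section Core
variable {k : Type u} [Field k]
variable {A : Type u} [Ring A] [HopfAlgebra k A]
variable {V W : Type u} [AddCommGroup V] [Module k V] [AddCommGroup W] [Module k W]

lemma expand {n : Type*} [Fintype n] {A : Type u} [AddCommGroup A] [Module k A]
    (b : Module.Basis n k V) (t : V ⊗[k] A) :
    t = ∑ i, b i ⊗ₜ[k] (TensorProduct.lid k A ((b.coord i).rTensor A t)) := by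
  induction t with
  | zero => simp
  | add x y hx hy =>
    simp only [map_add, TensorProduct.tmul_add, Finset.sum_add_distrib]
    rw [← hx, ← hy]
  | tmul v c =>
    simp only [LinearMap.rTensor_tmul, TensorProduct.lid_tmul, ← TensorProduct.smul_tmul,
      ← TensorProduct.sum_tmul]
    congr 1
    simp only [Module.Basis.coord_apply]
    exact (b.sum_repr v).symm

lemma exists_matrix {n : Type*} [Fintype n] [DecidableEq n] {ρ : V →ₗ[k] V ⊗[k] A}
    (h : IsComod k A ρ) (b : Module.Basis n k V) :
    ∃ a : Matrix n n A, (∀ j, ρ (b j) = ∑ i, b i ⊗ₜ[k] a i j) ∧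
      (∀ i j, Coalgebra.comul (R := k) (a i j) = ∑ l, a i l ⊗ₜ[k] a l j) ∧
      (∀ i j, Coalgebra.counit (R := k) (a i j) = if i = j then 1 else 0) := by
  refine ⟨fun i j => TensorProduct.lid k A ((b.coord i).rTensor A (ρ (b j))),
    fun j => expand b _, ?_, ?_⟩
  all_goals
    generalize ha : (fun i j => TensorProduct.lid k A ((b.coord i).rTensor A (ρ (b j)))) = a
    have h1 : ∀ j, ρ (b j) = ∑ i, b i ⊗ₜ[k] a i j := by
      intro j; rw [← ha]; exact expand b _
    intro i j
  · have := congrArg (fun t => TensorProduct.lid k _ ((b.coord i).rTensor _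
      (TensorProduct.assoc k V A A t))) (h.coassoc (b j))
    simp only [h1, map_sum, LinearMap.rTensor_tmul, TensorProduct.sum_tmul,
      TensorProduct.assoc_tmul, TensorProduct.lid_tmul, LinearMap.lTensor_tmul,
      LinearEquiv.coe_coe, LinearEquiv.apply_symm_apply, Module.Basis.coord_apply,
      Module.Basis.repr_self, Finsupp.single_apply, ite_smul, one_smul, zero_smul,
      Finset.sum_ite_eq', Finset.mem_univ, if_true] at this
    exact this.symm
  · have := congrArg (b.coord i) (h.counit (b j))
    simp only [h1, map_sum, LinearMap.lTensor_tmul, TensorProduct.rid_tmul, map_smul,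
      Module.Basis.coord_apply, smul_eq_mul, mul_ite, mul_one, mul_zero,
      Module.Basis.repr_self, Finsupp.single_apply, 
      Finset.sum_ite_eq', Finset.mem_univ, if_true] at this
    rw [this]
    simp [eq_comm]

/-- entrywise antipode -/
noncomputable def antiM {n m : Type*} (a : Matrix n m A) : Matrix n m A :=
  a.map (HopfAlgebra.antipode (R := k) (A := A))

lemma antiM_mul {n : Type*} [Fintype n] [DecidableEq n] {a : Matrix n n A}
    (h1 : ∀ i j, Coalgebra.comul (R := k) (a i j) = ∑ l, a i l ⊗ₜ[k] a l j)
    (h2 : ∀ i j, Coalgebra.counit (R := k) (a i j) = if i = j then (1 : k) else 0) :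
    antiM (k := k) a * a = 1 := by
  ext i j
  have := HopfAlgebra.mul_antipode_rTensor_comul_apply (R := k) (a i j)
  rw [h1, h2] at this
  simp only [map_sum, LinearMap.rTensor_tmul, LinearMap.mul'_apply] at this
  rw [Matrix.mul_apply, Matrix.one_apply]
  simp only [antiM, Matrix.map_apply, this]
  split_ifs <;> simp

lemma mul_antiM {n : Type*} [Fintype n] [DecidableEq n] {a : Matrix n n A}
    (h1 : ∀ i j, Coalgebra.comul (R := k) (a i j) = ∑ l, a i l ⊗ₜ[k] a l j)
    (h2 : ∀ i j, Coalgebra.counit (R := k) (a i j) = if i = j then (1 : k) else 0) :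
    a * antiM (k := k) a = 1 := by
  ext i j
  have := HopfAlgebra.mul_antipode_lTensor_comul_apply (R := k) (a i j)
  rw [h1, h2] at this
  simp only [map_sum, LinearMap.lTensor_tmul, LinearMap.mul'_apply] at this
  rw [Matrix.mul_apply, Matrix.one_apply]
  simp only [antiM, Matrix.map_apply, this]
  split_ifs <;> simp

variable {B : Type u} [Ring B] [HopfAlgebra k B]

/-- left and right legs -/
noncomputable def legL (p : A →ₗ[k] B) {n m : Type*} (a : Matrix n m A) : Matrix n m (B ⊗[k] A) :=
  a.map fun x => p x ⊗ₜ[k] (1 : A)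

noncomputable def legR (B : Type u) [Ring B] [HopfAlgebra k B] {n m : Type*} (a : Matrix n m A) :
    Matrix n m (B ⊗[k] A) :=
  a.map (Algebra.TensorProduct.includeRight (R := k) (A := B) (B := A))

lemma legR_mul {n m l : Type*} [Fintype m] (a : Matrix n m A) (b : Matrix m l A) :
    legR (k := k) B (a * b) = legR (k := k) B a * legR (k := k) B b :=
  Matrix.map_mul

lemma adR_matrix {n : Type*} [Fintype n] [DecidableEq n] {a : Matrix n n A}
    (h1 : ∀ i j, Coalgebra.comul (R := k) (a i j) = ∑ l, a i l ⊗ₜ[k] a l j)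
    (p : A →ₗ[k] B) (R : B →ₗ[k] B ⊗[k] A) (hR : R ∘ₗ p = (p.rTensor A) ∘ₗ adR k A) :
    (a.map fun x => R (p x)) = legR (k := k) B (antiM (k := k) a) * legL p a * legR (k := k) B a := by
  ext i j
  have := LinearMap.congr_fun hR (a i j)
  simp only [LinearMap.comp_apply] at this
  rw [Matrix.map_apply, this]
  simp only [adR, comul2, LinearMap.comp_apply, h1, map_sum, LinearMap.lTensor_tmul,
    LinearMap.rTensor_tmul, TensorProduct.tmul_sum, LinearEquiv.coe_coe,
    TensorProduct.assoc_symm_tmul, TensorProduct.assoc_tmul, TensorProduct.comm_tmul,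
    LinearMap.mul'_apply, Matrix.mul_apply, legR, legL, antiM, Matrix.map_apply,
    Algebra.TensorProduct.includeRight_apply, Finset.sum_mul,
    Algebra.TensorProduct.tmul_mul_tmul, one_mul, mul_one]
  rw [Finset.sum_comm]

/-- The matrix form of the key computation. -/
lemma key_matrix {n m : Type*} [Fintype n] [DecidableEq n] [Fintype m] [DecidableEq m]
    {a : Matrix n n A} {b : Matrix m m A}
    (ha1 : ∀ i j, Coalgebra.comul (R := k) (a i j) = ∑ l, a i l ⊗ₜ[k] a l j)
    (ha2 : ∀ i j, Coalgebra.counit (R := k) (a i j) = if i = j then (1 : k) else 0)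
    (hb1 : ∀ i j, Coalgebra.comul (R := k) (b i j) = ∑ l, b i l ⊗ₜ[k] b l j)
    (hb2 : ∀ i j, Coalgebra.counit (R := k) (b i j) = if i = j then (1 : k) else 0)
    (p : A →ₗ[k] B) (R : B →ₗ[k] B ⊗[k] A) (hR : R ∘ₗ p = (p.rTensor A) ∘ₗ adR k A)
    (F : Matrix n m k) (hF : ∀ i j, ∑ l, F l j • p (a i l) = ∑ l, F i l • p (b l j)) :
    ∃ M : Matrix n m A, (∀ i j, ∑ l, F l j • a i l = ∑ l, M i l * b l j) ∧
      ∀ φ : A →ₗ[k] k, ∀ i j, ∑ l, φ (M l j) • p (a i l) = ∑ l, φ (M i l) • p (b l j) := by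
  let F' : Matrix n m A := F.map (algebraMap k A)
  let M : Matrix n m A := a * F' * antiM (k := k) b
  have hM : a * F' = M * b := by
    rw [show M * b = a * F' * (antiM (k := k) b * b) by simp only [M, Matrix.mul_assoc],
      antiM_mul hb1 hb2, Matrix.mul_one]
  refine ⟨M, ?_, ?_⟩
  · intro i j
    have := congrFun (congrFun hM i) j
    rw [Matrix.mul_apply, Matrix.mul_apply] at this
    rw [← this]
    refine Finset.sum_congr rfl fun l _ => ?_
    simp [F', Algebra.smul_def, Algebra.commutes]
  · have hRF : (a.map fun x => R (p x)) * legR (k := k) B F' =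
        legR (k := k) B F' * (b.map fun x => R (p x)) := by
      ext i j
      have := congrArg R (hF i j)
      simp only [map_sum, map_smul] at this
      simp only [Matrix.mul_apply, Matrix.map_apply, legR, F', AlgHom.commutes]
      simp only [← Algebra.commutes, ← Algebra.smul_def]
      exact this
    rw [adR_matrix ha1 p R hR, adR_matrix hb1 p R hR] at hRF
    have h1 : legR (k := k) B a * legR (k := k) B (antiM (k := k) a) = 1 := by
      rw [← legR_mul, mul_antiM ha1 ha2]; exact Matrix.map_one _ (map_zero _) (map_one _)
    have h2 : legR (k := k) B b * legR (k := k) B (antiM (k := k) b) = 1 := by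
      rw [← legR_mul, mul_antiM hb1 hb2]; exact Matrix.map_one _ (map_zero _) (map_one _)
    have hfin : legL p a * legR (k := k) B M = legR (k := k) B M * legL p b := by
      have := congrArg (fun X => legR (k := k) B a * X * legR (k := k) B (antiM (k := k) b)) hRF
      simp only [← Matrix.mul_assoc, h1, Matrix.one_mul] at this
      simp only [M, legR_mul, ← Matrix.mul_assoc]
      rw [this, Matrix.mul_assoc _ (legR (k := k) B b), h2, Matrix.mul_one]
    intro φ i j
    have := congrArg (sl (V := B) φ) (congrFun (congrFun hfin i) j)
    simpa [Matrix.mul_apply, legL, legR] using this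

lemma key_hom [Module.Finite k V] [Module.Finite k W]
    {ρV : V →ₗ[k] V ⊗[k] A} {ρW : W →ₗ[k] W ⊗[k] A}
    (hV : IsComod k A ρV) (hW : IsComod k A ρW)
    (p : A →ₗ[k] B) (hn : IsRightNormal k A p)
    {f : V →ₗ[k] W} (hf : IsComodHom k B (cores k A p ρV) (cores k A p ρW) f) (v : V)
    (φ : A →ₗ[k] k) :
    act ρW φ (f v) ∈ Submodule.span k {w : W | ∃ (g : V →ₗ[k] W) (v : V),
      IsComodHom k B (cores k A p ρV) (cores k A p ρW) g ∧ w = g v} := by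
  classical
  obtain ⟨R, hR⟩ := hn
  let bV := Module.finBasis k V
  let bW := Module.finBasis k W
  obtain ⟨b, hb0, hb1, hb2⟩ := exists_matrix hV bV
  obtain ⟨a, ha0, ha1, ha2⟩ := exists_matrix hW bW
  have crit : ∀ F : Matrix _ _ k,
      IsComodHom k B (cores k A p ρV) (cores k A p ρW) (Matrix.toLin bV bW F) ↔
      ∀ i j, ∑ l, F l j • p (a i l) = ∑ l, F i l • p (b l j) := by
    intro F
    have e1 : ∀ j, (cores k A p ρW) (Matrix.toLin bV bW F (bV j)) =
        ∑ i, bW i ⊗ₜ[k] ∑ l, F l j • p (a i l) := by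
      intro j
      simp only [Matrix.toLin_self, map_sum, map_smul, cores, LinearMap.comp_apply, ha0,
        LinearMap.lTensor_tmul, Finset.smul_sum, TensorProduct.tmul_sum, TensorProduct.tmul_smul]
      rw [Finset.sum_comm]
    have e2 : ∀ j, ((Matrix.toLin bV bW F).rTensor B) (cores k A p ρV (bV j)) =
        ∑ i, bW i ⊗ₜ[k] ∑ l, F i l • p (b l j) := by
      intro j
      simp only [Matrix.toLin_self, map_sum, cores, LinearMap.comp_apply, hb0,
        LinearMap.lTensor_tmul, LinearMap.rTensor_tmul, TensorProduct.sum_tmul,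
        TensorProduct.tmul_sum, TensorProduct.tmul_smul, TensorProduct.smul_tmul']
      rw [Finset.sum_comm]
    constructor
    · intro h i j
      have h := LinearMap.congr_fun h (bV j)
      simp only [LinearMap.comp_apply] at h
      rw [e1, e2] at h
      have h := congrArg (fun t => TensorProduct.lid k _ ((bW.coord i).rTensor _ t)) h
      simpa [Finsupp.single_apply] using h
    · intro h
      apply bV.ext
      intro j
      simp only [LinearMap.comp_apply]
      rw [e1, e2]
      simp only [h]
  obtain ⟨F, rfl⟩ := (Matrix.toLin bV bW).surjective f
  rw [crit] at hf
  obtain ⟨M, hM1, hM2⟩ := key_matrix ha1 ha2 hb1 hb2 p R hR F hf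
  have hv : v = ∑ j, bV.repr v j • bV j := (bV.sum_repr v).symm
  rw [hv]
  simp only [map_sum, map_smul]
  refine sum_mem fun j _ => Submodule.smul_mem _ _ ?_
  have : act ρW φ (Matrix.toLin bV bW F (bV j)) =
      ∑ l, Matrix.toLin bV bW (M.map fun x => φ (x * b l j)) (bV l) := by
    have hact : ∀ l, act ρW φ (bW l) = ∑ i, φ (a i l) • bW i := by
      intro l; simp [act, ha0]
    simp only [Matrix.toLin_self, map_sum, map_smul, hact, Finset.smul_sum, smul_smul]
    rw [Finset.sum_comm]
    conv_rhs => rw [Finset.sum_comm]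
    refine Finset.sum_congr rfl fun i _ => ?_
    have := congrArg φ (hM1 i j)
    simp only [map_sum, map_smul, smul_eq_mul] at this
    rw [← Finset.sum_smul, this, Finset.sum_smul]
    rfl
  rw [this]
  refine sum_mem fun l _ => Submodule.subset_span ⟨_, _, ?_, rfl⟩
  rw [crit]
  exact hM2 (φ ∘ₗ LinearMap.mulRight k (b l j))

end Core

section Final
variable {k : Type u} [Field k]

lemma cls_eq_iff {C : Type u} [AddCommGroup C] [Module k C] [Coalgebra k C]
    {X Y : SimpleComodule k C} : X.cls = Y.cls ↔ comodIsoRel k C X Y := by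
  have eqv : Equivalence (comodIsoRel k C) := by
    refine ⟨fun X => ⟨LinearEquiv.refl k _, ?_⟩, ?_, ?_⟩
    · rw [isComodHom_iff]; intros; rfl
    · rintro X Y ⟨e, he⟩; exact ⟨e.symm, hom_symm e he⟩
    · rintro X Y Z ⟨e, he⟩ ⟨e', he'⟩; exact ⟨e.trans e', hom_comp he' he⟩
  constructor
  · intro h
    exact eqv.eqvGen_iff.1 (Quot.eqvGen_exact h)
  · exact fun h => Quot.sound h

variable {G Hh : Type u} [Ring G] [HopfAlgebra k G] [Ring Hh] [HopfAlgebra k Hh]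

lemma hom_cores {V W : Type u} [AddCommGroup V] [Module k V] [AddCommGroup W] [Module k W]
    {ρV : V →ₗ[k] V ⊗[k] G} {ρW : W →ₗ[k] W ⊗[k] G} {f : V →ₗ[k] W}
    (h : IsComodHom k G ρV ρW f) (p : G →ₗ[k] Hh) :
    IsComodHom k Hh (cores k G p ρV) (cores k G p ρW) f := by
  rw [isComodHom_iff] at *
  intro φ v
  have e : ∀ {V : Type u} [AddCommGroup V] [Module k V] (t : V ⊗[k] G),
      sl φ (p.lTensor V t) = sl (φ ∘ₗ p) t := by
    intro V _ _ t
    induction t with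
    | zero => simp
    | tmul v c => simp
    | add x y hx hy => simp [hx, hy]
  have := h (φ ∘ₗ p) v
  simp only [act, LinearMap.comp_apply] at this
  simp only [act, cores, LinearMap.comp_apply, e, this]

lemma relRes_iff (π : G →ₐc[k] Hh) (X : SimpleComodule k G) (W : SimpleComodule k Hh) :
    relRes k π X.cls W.cls ↔ ∃ f : X.V →ₗ[k] W.V, f ≠ 0 ∧
      IsComodHom k Hh (cores k G (π : G →ₗ[k] Hh) X.ρ) W.ρ f := by
  constructor
  · rintro ⟨X', W', hX, hW, f, hf0, hf⟩
    obtain ⟨e, he⟩ := cls_eq_iff.1 hX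
    obtain ⟨e', he'⟩ := cls_eq_iff.1 hW
    refine ⟨e'.toLinearMap ∘ₗ f ∘ₗ e.symm.toLinearMap, ?_,
      hom_comp he' (hom_comp hf (hom_cores (hom_symm e he) _))⟩
    intro h
    apply hf0
    ext x
    have := LinearMap.congr_fun h (e x)
    simpa using this
  · rintro ⟨f, hf0, hf⟩
    exact ⟨X, W, rfl, rfl, f, hf0, hf⟩

lemma res_comod (π : G →ₐc[k] Hh) (X : SimpleComodule k G) :
    IsComod k Hh (cores k G (π : G →ₗ[k] Hh) X.ρ) := by
  refine cores_comod X.isComod _ (fun c => ?_) (fun c => ?_)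
  · exact (CoalgHomClass.map_comp_comul_apply π c).symm
  · exact CoalgHomClass.counit_comp_apply π c

lemma key_rel (π : G →ₐc[k] Hh) (hcssH : IsCosemisimple k Hh)
    (hnormr : IsRightNormal k G (π : G →ₗ[k] Hh))
    {x x' : SimpleComodQuot k G} {w w' : SimpleComodQuot k Hh}
    (h1 : relRes k π x w) (h2 : relRes k π x' w) (h3 : relRes k π x' w') :
    relRes k π x w' := by
  obtain ⟨X, rfl⟩ : ∃ X : SimpleComodule k G, X.cls = x := Quot.exists_rep x
  obtain ⟨X', rfl⟩ : ∃ X : SimpleComodule k G, X.cls = x' := Quot.exists_rep x'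
  obtain ⟨W, rfl⟩ : ∃ X : SimpleComodule k Hh, X.cls = w := Quot.exists_rep w
  obtain ⟨W', rfl⟩ : ∃ X : SimpleComodule k Hh, X.cls = w' := Quot.exists_rep w'
  rw [relRes_iff] at *
  obtain ⟨f1, h10, h1⟩ := h1
  obtain ⟨f2, h20, h2⟩ := h2
  obtain ⟨f3, h30, h3⟩ := h3
  have := simple_fin X.isComod X.isSimple
  have := simple_fin X'.isComod X'.isSimple
  obtain ⟨g, hg, hgi⟩ := hom_rev1 hcssH (res_comod π X') W.isSimple h2 h20
  let T := Submodule.span k {w : X'.V | ∃ (g : X.V →ₗ[k] X'.V) (v : X.V),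
      IsComodHom k Hh (cores k G (π : G →ₗ[k] Hh) X.ρ) (cores k G (π : G →ₗ[k] Hh) X'.ρ) g ∧
        w = g v}
  have hT : IsSubcomod k G X'.ρ T := by
    rw [isSubcomod_iff]
    intro u hu φ
    induction hu using Submodule.span_induction with
    | mem x hx =>
      obtain ⟨q, v, hq, rfl⟩ := hx
      exact key_hom X.isComod X'.isComod _ hnormr hq v φ
    | zero => simp
    | add x y _ _ hx hy => rw [map_add]; exact add_mem hx hy
    | smul a x _ hx => rw [map_smul]; exact Submodule.smul_mem _ _ hx
  rcases X'.isSimple.2.2 T le_top hT with hT0 | hT1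
  · exfalso
    apply h10
    ext v
    have : g (f1 v) ∈ T := Submodule.subset_span ⟨g ∘ₗ f1, v, hom_comp hg h1, rfl⟩
    rw [hT0, Submodule.mem_bot] at this
    exact hgi (by simpa using this)
  · by_contra hc
    push Not at hc
    apply h30
    rw [← LinearMap.ker_eq_top, eq_top_iff, ← hT1]
    refine Submodule.span_le.2 ?_
    rintro _ ⟨q, v, hq, rfl⟩
    by_contra hne
    refine hc (f3 ∘ₗ q) ?_ (hom_comp h3 hq)
    intro h
    exact hne (LinearMap.congr_fun h v)

lemma exists_left (π : G →ₐc[k] Hh) (hsurj : Function.Surjective π)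
    (hcssG : IsCosemisimple k G) (hcssH : IsCosemisimple k Hh) (w : SimpleComodQuot k Hh) :
    ∃ x, relRes k π x w := by
  obtain ⟨W, rfl⟩ : ∃ X : SimpleComodule k Hh, X.cls = w := Quot.exists_rep w
  obtain ⟨w, -, hw⟩ := (Submodule.ne_bot_iff _).1 W.isSimple.2.1
  obtain ⟨θ, hθ⟩ : ∃ θ : W.V →ₗ[k] k, θ w ≠ 0 := by
    by_contra! hc
    exact hw ((Module.forall_dual_apply_eq_zero_iff k w).1 hc)
  let j : W.V →ₗ[k] Hh := (TensorProduct.lid k Hh).toLinearMap ∘ₗ θ.rTensor Hh ∘ₗ W.ρ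
  have hj : IsComodHom k Hh W.ρ (Coalgebra.comul (R := k) (A := Hh)) j := by
    ext v
    have e : ∀ t : W.V ⊗[k] Hh, Coalgebra.comul (R := k) (TensorProduct.lid k Hh (θ.rTensor Hh t)) =
        TensorProduct.lid k _ (θ.rTensor _ (TensorProduct.assoc k W.V Hh Hh
          ((TensorProduct.assoc k W.V Hh Hh).symm.toLinearMap
          ((Coalgebra.comul (R := k) (A := Hh)).lTensor W.V t)))) := by
      intro t
      induction t with
      | zero => simp
      | tmul v c => simp
      | add x y hx hy => simp only [map_add, hx, hy]
    have e' : ∀ t : W.V ⊗[k] Hh, TensorProduct.lid k _ (θ.rTensor _ (TensorProduct.assoc k W.V Hh Hh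
        (W.ρ.rTensor Hh t))) = j.rTensor Hh t := by
      intro t
      induction t with
      | zero => simp
      | add x y hx hy => simp only [map_add, hx, hy]
      | tmul v c =>
        simp only [LinearMap.rTensor_tmul, j, LinearMap.comp_apply]
        generalize W.ρ v = s
        induction s with
        | zero => simp
        | add x y hx hy => simp only [map_add, TensorProduct.add_tmul, hx, hy]
        | tmul v d => simp [TensorProduct.smul_tmul']
    change Coalgebra.comul (R := k) (TensorProduct.lid k Hh (θ.rTensor Hh (W.ρ v))) =
      j.rTensor Hh (W.ρ v)
    rw [e, ← W.isComod.coassoc, e']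
  have hj0 : j ≠ 0 := by
    intro h
    apply hθ
    have e : ∀ t : W.V ⊗[k] Hh, Coalgebra.counit (R := k) (TensorProduct.lid k Hh (θ.rTensor Hh t))
        = θ (sl (Coalgebra.counit (R := k) (A := Hh)) t) := by
      intro t
      induction t with
      | zero => simp
      | tmul v c => simp [mul_comm]
      | add x y hx hy => simp only [map_add, hx, hy]
    have h2 := e (W.ρ w)
    have h3 : sl (Coalgebra.counit (R := k) (A := Hh)) (W.ρ w) = w := W.isComod.counit w
    have h4 : TensorProduct.lid k Hh (θ.rTensor Hh (W.ρ w)) = 0 := LinearMap.congr_fun h w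
    rw [h3, h4, map_zero] at h2
    exact h2.symm
  obtain ⟨q, hq, hq0⟩ := hom_rev2 hcssH regular_comod W.isSimple hj hj0
  have hπ : IsComodHom k Hh
      (cores k G (π : G →ₗ[k] Hh) (Coalgebra.comul (R := k) (A := G)))
      (Coalgebra.comul (R := k) (A := Hh)) (π : G →ₗ[k] Hh) := by
    ext c
    have h1 : Coalgebra.comul (R := k) (π c) = TensorProduct.map (π : G →ₗ[k] Hh) (π : G →ₗ[k] Hh)
      (Coalgebra.comul (R := k) c) := (CoalgHomClass.map_comp_comul_apply π c).symm
    change Coalgebra.comul (R := k) (π c) = (LinearMap.rTensor Hh (π : G →ₗ[k] Hh))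
      ((LinearMap.lTensor G (π : G →ₗ[k] Hh)) (Coalgebra.comul (R := k) c))
    rw [h1]
    exact (LinearMap.congr_fun (LinearMap.rTensor_comp_lTensor _ _ _) _).symm
  have hqπ : q ∘ₗ (π : G →ₗ[k] Hh) ≠ 0 := by
    intro h
    apply hq0
    ext y
    obtain ⟨x, rfl⟩ := hsurj y
    exact LinearMap.congr_fun h x
  obtain ⟨ι, U, hU, -, htop⟩ := hcssG G _ regular_comod
  obtain ⟨i, hi⟩ := exists_iso_of_map U htop hqπ
  obtain ⟨ρU, hUc, hUs, hUh⟩ := exists_restrict regular_comod (hU i)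
  refine ⟨SimpleComodule.cls k G ⟨U i, ρU, hUc, hUs⟩, ?_⟩
  rw [relRes_iff]
  exact ⟨_, hi, hom_comp (hom_comp hq hπ) (hom_cores hUh _)⟩

lemma right_fin (π : G →ₐc[k] Hh) (hcssH : IsCosemisimple k Hh) (x : SimpleComodQuot k G) :
    {w | relRes k π x w}.Finite ∧ ∃ w, relRes k π x w := by
  obtain ⟨X, rfl⟩ : ∃ X : SimpleComodule k G, X.cls = x := Quot.exists_rep x
  have := simple_fin X.isComod X.isSimple
  obtain ⟨ι, U, hU, hind, htop⟩ := hcssH X.V _ (res_comod π X)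
  have hfin : Finite ι := by
    exact WellFoundedGT.finite_of_iSupIndep hind fun i => (hU i).2.1
  choose ρU hc hs hh using fun i => exists_restrict (res_comod π X) (hU i)
  let S : ι → SimpleComodule k Hh := fun i => ⟨U i, ρU i, hc i, hs i⟩
  constructor
  · refine (Set.finite_range fun i => (S i).cls).subset ?_
    intro w hw
    obtain ⟨W, rfl⟩ : ∃ X : SimpleComodule k Hh, X.cls = w := Quot.exists_rep w
    rw [Set.mem_ofPred_eq, relRes_iff] at hw
    obtain ⟨f, hf0, hf⟩ := hw
    obtain ⟨i, hi⟩ := exists_iso_of_map U htop hf0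
    refine ⟨i, ?_⟩
    exact cls_eq_iff.2 (schur (hs i) W.isSimple (hom_comp hf (hh i)) hi)
  · obtain ⟨i⟩ : Nonempty ι := by
      by_contra hc
      rw [not_nonempty_iff] at hc
      apply X.isSimple.2.1
      rw [← htop]; simp
    refine ⟨(S i).cls, ?_⟩
    rw [relRes_iff]
    have h0 : (U i).subtype ≠ 0 := by
      intro h
      apply (hU i).2.1
      rw [← Submodule.range_subtype (U i), h, LinearMap.range_zero]
    obtain ⟨g, hg, hg0⟩ := hom_rev2 hcssH (res_comod π X) (hs i) (hh i) h0
    exact ⟨g, hg0, hg⟩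

end Final

end QG

open QG in
/-- Let `H ⊴ G` be a normal embedding of linearly reductive
quantum groups and `∼` the relation of Theorem th:clifsum.  Then (a) the
left-hand slices `slice_W` are exactly the classes of the equivalence
relation `∼_G` ("same simple constituents upon restriction"), and (b) the
right-hand slices `_V slice` are exactly the (finite) classes of an
equivalence relation on `Ĥ`. -/
theorem statement_13 (k : Type u) [Field k] [IsAlgClosed k]
    (G Hh : Type u) [Ring G] [HopfAlgebra k G] [Ring Hh] [HopfAlgebra k Hh]
    (π : G →ₐc[k] Hh) (hsurj : Function.Surjective π)
    (hcssG : IsCosemisimple k G) (hcssH : IsCosemisimple k Hh)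
    (hnorml : IsLeftNormal k G (π : G →ₗ[k] Hh))
    (hnormr : IsRightNormal k G (π : G →ₗ[k] Hh)) :
    (Equivalence (relResG k π) ∧
      (∀ w : SimpleComodQuot k Hh, ∃ x₀ : SimpleComodQuot k G,
        {x | relRes k π x w} = {x | relResG k π x₀ x}) ∧
      (∀ x₀ : SimpleComodQuot k G, ∃ w : SimpleComodQuot k Hh,
        {x | relResG k π x₀ x} = {x | relRes k π x w})) ∧
    (∃ r : SimpleComodQuot k Hh → SimpleComodQuot k Hh → Prop,
      Equivalence r ∧
      (∀ x : SimpleComodQuot k G, {w | relRes k π x w}.Finite) ∧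
      (∀ x : SimpleComodQuot k G, ∃ w₀ : SimpleComodQuot k Hh,
        {w | relRes k π x w} = {w | r w₀ w}) ∧
      (∀ w₀ : SimpleComodQuot k Hh, ∃ x : SimpleComodQuot k G,
        {w | r w₀ w} = {w | relRes k π x w})) := by
  have key := @key_rel k _ G Hh _ _ _ _ π hcssH hnormr
  have ex1 := exists_left π hsurj hcssG hcssH
  have ex2 := right_fin π hcssH
  have cls : ∀ {x₀ x w}, relRes k π x₀ w → (relRes k π x w ↔ relResG k π x₀ x) := by
    intro x₀ x w h0
    constructor
    · intro h w'
      exact ⟨fun h' => key h h0 h', fun h' => key h0 h h'⟩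
    · intro h
      exact (h w).1 h0
  refine ⟨⟨⟨fun x w => Iff.rfl, fun h w => (h w).symm, fun h h' w => (h w).trans (h' w)⟩, ?_, ?_⟩,
    fun w w' => ∃ x, relRes k π x w ∧ relRes k π x w', ⟨?_, ?_, ?_⟩, fun x => (ex2 x).1, ?_, ?_⟩
  · intro w
    obtain ⟨x₀, h0⟩ := ex1 w
    exact ⟨x₀, Set.ext fun x => cls h0⟩
  · intro x₀
    obtain ⟨w, h0⟩ := (ex2 x₀).2
    exact ⟨w, Set.ext fun x => (cls h0).symm⟩
  · intro w
    obtain ⟨x, h⟩ := ex1 w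
    exact ⟨x, h, h⟩
  · rintro w w' ⟨x, h, h'⟩
    exact ⟨x, h', h⟩
  · rintro w w' w'' ⟨x, h, h'⟩ ⟨y, h1, h2⟩
    exact ⟨x, h, key h' h1 h2⟩
  · intro x
    obtain ⟨w₀, h0⟩ := (ex2 x).2
    refine ⟨w₀, Set.ext fun w => ⟨fun h => ⟨x, h0, h⟩, ?_⟩⟩
    rintro ⟨y, h1, h2⟩
    exact key h0 h1 h2
  · intro w₀
    obtain ⟨x, h0⟩ := ex1 w₀
    refine ⟨x, Set.ext fun w => ⟨?_, fun h => ⟨x, h0, h⟩⟩⟩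
    rintro ⟨y, h1, h2⟩
    exact key h0 h1 h2
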